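/- Let F ⊂ Sym²(ℝⁿ) be a Dirichlet set with ray set F⃗, and let Ω ⊂ ℝⁿ be a bounded open set with smooth boundary. If ∂Ω is strictly F⃗-convex at each of its points, then there exist an open set V containing the closure cl(Ω) and a smooth function ρ : V → ℝ such that Ω = {x ∈ V : ρ(x) < 0}, ∇ρ(x) ≠ 0 for every x ∈ ∂Ω, Hess_x ρ ∈ Int F⃗ for every x ∈ cl(Ω), and moreover there exist ε > 0 and R > 0 such that C(Hess_x ρ − εI) ∈ F for every C ≥ R and every x ∈ cl(Ω). -/

import Mathlib

open Set Metric Filter MeasureTheory Asymptotics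
open scoped Topology BigOperators RealInnerProductSpace

noncomputable section

abbrev Euc (n : ℕ) : Type := EuclideanSpace ℝ (Fin n)

abbrev SymMat (n : ℕ) : Type := ↥(selfAdjoint (Matrix (Fin n) (Fin n) ℝ))

/-- `u` is subaffine on `X`. -/
def SubaffineOn {n : ℕ} (X : Set (Euc n)) (u : Euc n → EReal) : Prop :=
  ∀ K : Set (Euc n), IsCompact K → K ⊆ X →
    ∀ a : Euc n →ᵃ[ℝ] ℝ,
      (∀ x ∈ frontier K, u x ≤ (a x : EReal)) → ∀ x ∈ K, u x ≤ (a x : EReal)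

/-- The Hessian matrix of `u` at `x`. -/
def hessMat {n : ℕ} (u : Euc n → ℝ) (x : Euc n) : Matrix (Fin n) (Fin n) ℝ :=
  fun i j => iteratedFDeriv ℝ 2 u x ![EuclideanSpace.single i 1, EuclideanSpace.single j 1]

structure IsDirichletSet {n : ℕ} (F : Set (SymMat n)) : Prop where
  nonempty : F.Nonempty
  ne_univ : F ≠ Set.univ
  isClosed : IsClosed F
  add_psd : ∀ A ∈ F, ∀ P : SymMat n, (P : Matrix (Fin n) (Fin n) ℝ).PosSemidef → A + P ∈ F

/-- The Dirichlet dual `F̃ = −(∼ Int F)`. -/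
def dirDual {n : ℕ} (F : Set (SymMat n)) : Set (SymMat n) := {A | -A ∉ interior F}

/-- A C² function `v` on `X` is of type `F`. -/
def IsTypeFC2 {n : ℕ} (F : Set (SymMat n)) (X : Set (Euc n)) (v : Euc n → ℝ) : Prop :=
  ContDiffOn ℝ 2 v X ∧ ∀ x ∈ X, ∃ A ∈ F, (A : Matrix (Fin n) (Fin n) ℝ) = hessMat v x

/-- An u.s.c. function `u` is of type `F` on `X`. -/
def IsTypeF {n : ℕ} (F : Set (SymMat n)) (X : Set (Euc n)) (u : Euc n → EReal) : Prop :=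
  ∀ v : Euc n → ℝ, IsTypeFC2 (dirDual F) X v → SubaffineOn X (fun x => u x + (v x : EReal))

/-- The ray set `F⃗` of `F`. -/
def raySet {n : ℕ} (F : Set (SymMat n)) : Set (SymMat n) :=
  closure {A : SymMat n | ∃ t₀ : ℝ, ∀ t : ℝ, t₀ ≤ t → t • A ∈ F}

/-- The bilinear form `⟨A v, w⟩` of a matrix. -/
def bilin {n : ℕ} (A : Matrix (Fin n) (Fin n) ℝ) (v w : Euc n) : ℝ :=
  ∑ i, ∑ j, A i j * v i * w j

/-- `A` is not negative definite. -/
def NotNegDef {n : ℕ} (A : SymMat n) : Prop :=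
  ¬ (-(A : Matrix (Fin n) (Fin n) ℝ)).PosDef

def IsLocalDefiningFn {n : ℕ} (Ω U : Set (Euc n)) (ρ : Euc n → ℝ) : Prop :=
  IsOpen U ∧ ContDiffOn ℝ (⊤ : ℕ∞) ρ U ∧ Ω ∩ U = {y ∈ U | ρ y < 0} ∧ ∀ y ∈ U, fderiv ℝ ρ y ≠ 0

def HasSmoothBoundary {n : ℕ} (Ω : Set (Euc n)) : Prop :=
  ∀ x ∈ frontier Ω, ∃ U ρ, x ∈ U ∧ IsLocalDefiningFn Ω U ρ

/-- `∂Ω` is strictly `G`-convex at `x`. -/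
def StrictlyConvexAt {n : ℕ} (G : Set (SymMat n)) (Ω : Set (Euc n)) (x : Euc n) : Prop :=
  ∃ U ρ, x ∈ U ∧ IsLocalDefiningFn Ω U ρ ∧
    ∃ B ∈ interior G, ∀ v w : Euc n, fderiv ℝ ρ x v = 0 → fderiv ℝ ρ x w = 0 →
      bilin (hessMat ρ x) v w = bilin (B : Matrix (Fin n) (Fin n) ℝ) v w

def symOne (n : ℕ) : SymMat n := ⟨1, selfAdjoint.mem_iff.mpr (IsSelfAdjoint.one _)⟩

/-- `u` is twice differentiable at `x` with Hessian `A`. -/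
def TwiceDiffWithHessAt {n : ℕ} (u : Euc n → ℝ) (x : Euc n)
    (A : Matrix (Fin n) (Fin n) ℝ) : Prop :=
  ∃ p : Euc n, (fun h : Euc n => u (x + h) - u x - ⟪p, h⟫ - 1/2 * bilin A h h)
      =o[𝓝 (0 : Euc n)] fun h => ‖h‖ ^ 2

instance gd_contSMul (n : ℕ) : ContinuousSMul ℝ (SymMat n) where
  continuous_smul := by
    refine Continuous.subtype_mk ?_ _
    exact continuous_fst.smul (continuous_subtype_val.comp continuous_snd)

lemma gd_bilin_eq {n : ℕ} (A : Matrix (Fin n) (Fin n) ℝ) (v : Fin n → ℝ) :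
    star v ⬝ᵥ A.mulVec v = bilin A (WithLp.toLp 2 v) (WithLp.toLp 2 v) := by
  simp only [bilin, dotProduct, Matrix.mulVec, Finset.mul_sum, Pi.star_apply, star_trivial]
  refine Finset.sum_congr rfl fun i _ => Finset.sum_congr rfl fun j _ => ?_
  ring

lemma gd_psd {n : ℕ} (X : SymMat n) (h : ∀ v : Euc n, 0 ≤ bilin (X : Matrix (Fin n) (Fin n) ℝ) v v) :
    (X : Matrix (Fin n) (Fin n) ℝ).PosSemidef := by
  refine Matrix.PosSemidef.of_dotProduct_mulVec_nonneg ?_ fun v => ?_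
  · exact X.2
  · rw [gd_bilin_eq]; exact h _

lemma gd_bilin_add {n : ℕ} (A B : Matrix (Fin n) (Fin n) ℝ) (v w : Euc n) :
    bilin (A + B) v w = bilin A v w + bilin B v w := by
  simp only [bilin, Matrix.add_apply, add_mul, Finset.sum_add_distrib]

lemma gd_bilin_smul {n : ℕ} (c : ℝ) (A : Matrix (Fin n) (Fin n) ℝ) (v w : Euc n) :
    bilin (c • A) v w = c * bilin A v w := by
  simp only [bilin, Matrix.smul_apply, smul_eq_mul, Finset.mul_sum, mul_assoc]

lemma gd_bilin_one {n : ℕ} (v : Euc n) :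
    bilin (1 : Matrix (Fin n) (Fin n) ℝ) v v = ‖v‖ ^ 2 := by
  rw [EuclideanSpace.real_norm_sq_eq]
  simp [bilin, Matrix.one_apply, pow_two]

lemma gd_bilin_lower {n : ℕ} (A : Matrix (Fin n) (Fin n) ℝ) (v : Euc n) :
    -(∑ i, ∑ j, |A i j|) * ‖v‖ ^ 2 ≤ bilin A v v := by
  have hc : ∀ i, |v i| ≤ ‖v‖ := fun i => by
    simpa using PiLp.norm_apply_le v i
  rw [neg_mul, neg_le, Finset.sum_mul]
  unfold bilin
  rw [← Finset.sum_neg_distrib]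
  refine Finset.sum_le_sum fun i _ => ?_
  rw [Finset.sum_mul, ← Finset.sum_neg_distrib]
  refine Finset.sum_le_sum fun j _ => ?_
  calc -(A i j * v i * v j) ≤ |A i j * v i * v j| := neg_le_abs _
    _ = |A i j| * (|v i| * |v j|) := by rw [abs_mul, abs_mul, mul_assoc]
    _ ≤ |A i j| * ‖v‖ ^ 2 := by
      rw [pow_two]
      gcongr <;> exact hc _

@[simp] lemma gd_coe_symOne (n : ℕ) : ((symOne n : SymMat n) : Matrix (Fin n) (Fin n) ℝ) = 1 := rfl

lemma gd_nhds_psd {n : ℕ} {δ : ℝ} (hδ : 0 < δ) :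
    ∀ᶠ X : SymMat n in 𝓝 0, ((X + δ • symOne n : SymMat n) : Matrix (Fin n) (Fin n) ℝ).PosSemidef := by
  have hcont : Continuous fun X : SymMat n => ∑ i, ∑ j, |(X : Matrix (Fin n) (Fin n) ℝ) i j| := by
    refine continuous_finsetSum _ fun i _ => continuous_finsetSum _ fun j _ => ?_
    exact (continuous_subtype_val.matrix_elem i j).abs
  have : ∀ᶠ X : SymMat n in 𝓝 0, ∑ i, ∑ j, |(X : Matrix (Fin n) (Fin n) ℝ) i j| < δ := by
    refine hcont.continuousAt.eventually_lt continuousAt_const ?_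
    simpa using hδ
  filter_upwards [this] with X hX
  refine gd_psd _ fun v => ?_
  have h1 := gd_bilin_lower (X : Matrix (Fin n) (Fin n) ℝ) v
  have h2 : ((X + δ • symOne n : SymMat n) : Matrix (Fin n) (Fin n) ℝ)
    = (X : Matrix (Fin n) (Fin n) ℝ) + δ • (1 : Matrix (Fin n) (Fin n) ℝ) := rfl
  rw [h2, gd_bilin_add, gd_bilin_smul, gd_bilin_one]
  nlinarith [sq_nonneg ‖v‖]

def gdS {n : ℕ} (F : Set (SymMat n)) : Set (SymMat n) :=
  {A : SymMat n | ∃ t₀ : ℝ, ∀ t : ℝ, t₀ ≤ t → t • A ∈ F}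

lemma gd_psd_smul {n : ℕ} {P : SymMat n} (hP : (P : Matrix (Fin n) (Fin n) ℝ).PosSemidef) {c : ℝ}
    (hc : 0 ≤ c) : ((c • P : SymMat n) : Matrix (Fin n) (Fin n) ℝ).PosSemidef :=
  hP.smul hc

lemma gd_S_add {n : ℕ} {F : Set (SymMat n)} (hF : IsDirichletSet F) {A P : SymMat n}
    (hA : A ∈ gdS F) (hP : (P : Matrix (Fin n) (Fin n) ℝ).PosSemidef) : A + P ∈ gdS F := by
  obtain ⟨t₀, ht⟩ := hA
  refine ⟨max t₀ 0, fun t htt => ?_⟩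
  rw [smul_add]
  exact hF.add_psd _ (ht t (le_trans (le_max_left _ _) htt)) _
    (gd_psd_smul hP (le_trans (le_max_right _ _) htt))

lemma gd_S_smul {n : ℕ} {F : Set (SymMat n)} {A : SymMat n}
    (hA : A ∈ gdS F) {c : ℝ} (hc : 0 < c) : c • A ∈ gdS F := by
  obtain ⟨t₀, ht⟩ := hA
  refine ⟨t₀ / c, fun t htt => ?_⟩
  rw [smul_smul]
  exact ht _ (by rwa [div_le_iff₀ hc] at htt)

lemma gd_ray_add {n : ℕ} {F : Set (SymMat n)} (hF : IsDirichletSet F) {A P : SymMat n}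
    (hA : A ∈ raySet F) (hP : (P : Matrix (Fin n) (Fin n) ℝ).PosSemidef) : A + P ∈ raySet F := by
  have hc : Continuous fun X : SymMat n => X + P := by fun_prop
  exact map_mem_closure (f := fun X : SymMat n => X + P) hc hA fun X hX => gd_S_add hF hX hP

lemma gd_int_add {n : ℕ} {F : Set (SymMat n)} (hF : IsDirichletSet F) {A P : SymMat n}
    (hA : A ∈ interior (raySet F)) (hP : (P : Matrix (Fin n) (Fin n) ℝ).PosSemidef) :
    A + P ∈ interior (raySet F) := by
  have hc : Continuous fun X : SymMat n => X - P := by fun_prop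
  refine mem_interior.2 ⟨(fun X : SymMat n => X - P) ⁻¹' interior (raySet F), fun X hX => ?_,
    isOpen_interior.preimage hc, by simpa using hA⟩
  have := gd_ray_add hF (interior_subset hX) hP
  simpa using this

lemma gd_int_smul {n : ℕ} {F : Set (SymMat n)} {A : SymMat n}
    (hA : A ∈ interior (raySet F)) {c : ℝ} (hc : 0 < c) : c • A ∈ interior (raySet F) := by
  have hk : Continuous fun X : SymMat n => c⁻¹ • X := by fun_prop
  have hk2 : Continuous fun X : SymMat n => c • X := by fun_prop
  refine mem_interior.2 ⟨(fun X : SymMat n => c⁻¹ • X) ⁻¹' interior (raySet F), fun X hX => ?_,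
    isOpen_interior.preimage hk, by simpa [smul_smul, hc.ne'] using hA⟩
  have : c • c⁻¹ • X ∈ raySet F :=
    map_mem_closure hk2 (interior_subset hX) fun Y hY => gd_S_smul hY hc
  simpa [smul_smul, hc.ne'] using this

lemma gd_ray_int {n : ℕ} {F : Set (SymMat n)} (hF : IsDirichletSet F) {A : SymMat n}
    (hA : A ∈ raySet F) {δ : ℝ} (hδ : 0 < δ) : A + δ • symOne n ∈ interior (raySet F) := by
  rw [mem_interior_iff_mem_nhds]
  have hc : Continuous fun X : SymMat n => X - (A + δ • symOne n) := by fun_prop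
  have h0 : Tendsto (fun X : SymMat n => X - (A + δ • symOne n)) (𝓝 (A + δ • symOne n)) (𝓝 0) := by
    simpa using hc.tendsto (A + δ • symOne n)
  filter_upwards [h0.eventually (gd_nhds_psd hδ)] with X hX
  have := gd_ray_add hF hA hX
  have e : A + (X - (A + δ • symOne n) + δ • symOne n) = X := by abel
  rwa [e] at this

lemma gd_zero_mem {n : ℕ} {F : Set (SymMat n)} (hF : IsDirichletSet F) : (0 : SymMat n) ∈ raySet F := by
  have h1 : symOne n ∈ gdS F := by
    obtain ⟨A, hA⟩ := hF.nonempty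
    have h0 : Tendsto (fun t : ℝ => -(t⁻¹ • A)) atTop (𝓝 0) := by
      simpa using ((tendsto_inv_atTop_zero (𝕜 := ℝ)).smul_const A).neg
    have h2 := (h0.eventually (gd_nhds_psd one_pos)).and (eventually_gt_atTop 0)
    obtain ⟨t₀, ht⟩ := eventually_atTop.1 h2
    refine ⟨t₀, fun t htt => ?_⟩
    obtain ⟨h3, h4⟩ := ht t htt
    have := hF.add_psd _ hA _ (gd_psd_smul h3 h4.le)
    have e : A + t • (-(t⁻¹ • A) + (1:ℝ) • symOne n) = t • symOne n := by
      simp [smul_smul, h4.ne']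
    rwa [e] at this
  have h0 : Tendsto (fun t : ℝ => t • symOne n) (𝓝[>] 0) (𝓝 0) := by
    have : Continuous fun t : ℝ => t • symOne n := by fun_prop
    simpa using (this.tendsto 0).mono_left nhdsWithin_le_nhds
  refine mem_closure_of_tendsto h0 ?_
  filter_upwards [self_mem_nhdsWithin] with t ht
  exact gd_S_smul h1 ht

lemma gd_int_sub {n : ℕ} {G : Set (SymMat n)} {A : SymMat n} (hA : A ∈ interior G) :
    ∃ δ : ℝ, 0 < δ ∧ A - δ • symOne n ∈ interior G := by
  have hc : Continuous fun t : ℝ => A - t • symOne n := by fun_prop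
  have h0 : Tendsto (fun t : ℝ => A - t • symOne n) (𝓝[>] 0) (𝓝 A) := by
    simpa using (hc.tendsto 0).mono_left nhdsWithin_le_nhds
  have h1 := (h0.eventually (isOpen_interior.mem_nhds hA)).and self_mem_nhdsWithin
  obtain ⟨δ, h2, h3⟩ := h1.exists
  exact ⟨δ, h3, h2⟩

/-- Uniform quantitative version over a compact set. -/
lemma gd_uniform {n : ℕ} {F : Set (SymMat n)} (hF : IsDirichletSet F) {K : Set (Euc n)}
    (hK : IsCompact K) (H : Euc n → SymMat n) (hH : Continuous H)
    (hint : ∀ x ∈ K, H x ∈ interior (raySet F)) :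
    ∃ ε : ℝ, 0 < ε ∧ ∃ R : ℝ, 0 < R ∧ ∀ C : ℝ, R ≤ C → ∀ x ∈ K,
      C • (H x - ε • symOne n) ∈ F := by
  have hone : ((symOne n : SymMat n) : Matrix (Fin n) (Fin n) ℝ).PosSemidef := Matrix.PosSemidef.one
  have key : ∀ (ε ε' C : ℝ) (x : Euc n), ε' ≤ ε → 0 ≤ C → C • (H x - ε • symOne n) ∈ F →
      C • (H x - ε' • symOne n) ∈ F := by
    intro ε ε' C x h hC hx
    have := hF.add_psd _ hx _ (gd_psd_smul (gd_psd_smul hone (sub_nonneg.2 h)) hC)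
    have e : C • (H x - ε • symOne n) + C • ((ε - ε') • symOne n) = C • (H x - ε' • symOne n) := by
      rw [← smul_add]; congr 1; module
    rwa [e] at this
  refine hK.induction_on (p := fun K => ∃ ε : ℝ, 0 < ε ∧ ∃ R : ℝ, 0 < R ∧ ∀ C : ℝ, R ≤ C → ∀ x ∈ K,
      C • (H x - ε • symOne n) ∈ F) ⟨1, one_pos, 1, one_pos, by simp⟩ ?_ ?_ ?_
  · rintro s t hst ⟨ε, hε, R, hR, h⟩
    exact ⟨ε, hε, R, hR, fun C hC x hx => h C hC x (hst hx)⟩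
  · rintro s t ⟨ε, hε, R, hR, h⟩ ⟨ε', hε', R', hR', h'⟩
    refine ⟨min ε ε', lt_min hε hε', max R R', lt_max_of_lt_left hR, fun C hC x hx => ?_⟩
    have hC0 : 0 ≤ C := hR.le.trans ((le_max_left _ _).trans hC)
    rcases hx with hx | hx
    · exact key _ _ _ _ (min_le_left _ _) hC0 (h C ((le_max_left _ _).trans hC) x hx)
    · exact key _ _ _ _ (min_le_right _ _) hC0 (h' C ((le_max_right _ _).trans hC) x hx)
  · intro x hx
    obtain ⟨δ, hδ, h⟩ := gd_int_sub (hint x hx)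
    have hδ3 : 0 < δ / 3 := by positivity
    have hB : H x - δ • symOne n ∈ closure (gdS F) := interior_subset h
    have hc : Continuous fun X : SymMat n => (H x - δ • symOne n) - X := by fun_prop
    have h0 : Tendsto (fun X : SymMat n => (H x - δ • symOne n) - X) (𝓝 (H x - δ • symOne n)) (𝓝 0) := by
      simpa using hc.tendsto (H x - δ • symOne n)
    obtain ⟨A', hA', t₀, ht₀⟩ := mem_closure_iff_nhds.1 hB _ (h0.eventually (gd_nhds_psd hδ3))
    have hc2 : Continuous fun y => H y - H x := by fun_prop
    have h02 : Tendsto (fun y => H y - H x) (𝓝 x) (𝓝 0) := by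
      simpa using hc2.tendsto x
    refine ⟨_, mem_nhdsWithin_of_mem_nhds (h02.eventually (gd_nhds_psd hδ3)), δ / 3, hδ3, max t₀ 1,
      by positivity, fun C hC y hy => ?_⟩
    have hC0 : 0 ≤ C := zero_le_one.trans ((le_max_right _ _).trans hC)
    have hy' : ((H y - H x + (δ/3) • symOne n : SymMat n) : Matrix (Fin n) (Fin n) ℝ).PosSemidef := hy
    have hA'' : ((H x - δ • symOne n - A' + (δ/3) • symOne n : SymMat n) : Matrix (Fin n) (Fin n) ℝ).PosSemidef := hA'
    have h5 := hF.add_psd _ (hF.add_psd _ (ht₀ C ((le_max_left _ _).trans hC)) _ (gd_psd_smul hy' hC0)) _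
      (gd_psd_smul hA'' hC0)
    have e : C • A' + C • (H y - H x + (δ/3) • symOne n) + C • (H x - δ • symOne n - A' + (δ/3) • symOne n)
      = C • (H y - (δ/3) • symOne n) := by
      module
    rwa [e] at h5

lemma gd_hess_apply {n : ℕ} (u : Euc n → ℝ) (x : Euc n) (i j : Fin n) :
    hessMat u x i j = fderiv ℝ (fderiv ℝ u) x (EuclideanSpace.single i 1) (EuclideanSpace.single j 1) := by
  simp [hessMat, iteratedFDeriv_two_apply]

lemma gd_vec_sum {n : ℕ} (v : Euc n) : v = ∑ i, v i • (EuclideanSpace.single i (1:ℝ) : Euc n) := by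
  ext j
  simp [Finset.sum_apply, Pi.single_apply]

lemma gd_bilin_hess {n : ℕ} (u : Euc n → ℝ) (x v w : Euc n) :
    bilin (hessMat u x) v w = fderiv ℝ (fderiv ℝ u) x v w := by
  conv_rhs => rw [gd_vec_sum v, gd_vec_sum w]
  simp only [map_sum, map_smul, _root_.sum_apply, _root_.smul_apply, bilin,
    gd_hess_apply, smul_eq_mul, Finset.mul_sum]
  rw [Finset.sum_comm]
  refine Finset.sum_congr rfl fun i _ => Finset.sum_congr rfl fun j _ => ?_
  ring

def gdH {n : ℕ} (u : Euc n → ℝ) (x : Euc n) : SymMat n :=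
  ⟨(1/2 : ℝ) • (hessMat u x + (hessMat u x).transpose), by
    rw [selfAdjoint.mem_iff]
    ext i j
    simp only [Matrix.star_apply, Matrix.smul_apply, Matrix.add_apply, Matrix.transpose_apply, star_trivial,
      add_comm]⟩

lemma gd_hess_symm {n : ℕ} {u : Euc n → ℝ} (hu : ContDiff ℝ (⊤ : ℕ∞) u) (x : Euc n) (i j : Fin n) :
    hessMat u x i j = hessMat u x j i := by
  rw [gd_hess_apply, gd_hess_apply]
  have : IsSymmSndFDerivAt ℝ u x := hu.contDiffAt.isSymmSndFDerivAt (by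
    simp only [minSmoothness_of_isRCLikeNormedField]
    exact WithTop.coe_le_coe.2 le_top)
  exact this _ _

lemma gdH_coe {n : ℕ} {u : Euc n → ℝ} (hu : ContDiff ℝ (⊤ : ℕ∞) u) (x : Euc n) :
    (gdH u x : Matrix (Fin n) (Fin n) ℝ) = hessMat u x := by
  ext i j
  simp only [gdH, Matrix.smul_apply, Matrix.add_apply, Matrix.transpose_apply, smul_eq_mul]
  rw [gd_hess_symm hu x j i]; ring

lemma gd_fd_smooth {n : ℕ} {u : Euc n → ℝ} (hu : ContDiff ℝ (⊤ : ℕ∞) u) :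
    ContDiff ℝ (⊤ : ℕ∞) (fderiv ℝ u) :=
  hu.fderiv_right (by exact_mod_cast le_top)

lemma gdH_cont {n : ℕ} {u : Euc n → ℝ} (hu : ContDiff ℝ (⊤ : ℕ∞) u) : Continuous (gdH u) := by
  refine Continuous.subtype_mk ?_ _
  have h : Continuous (fun x => hessMat u x) := by
    refine continuous_matrix fun i j => ?_
    simp only [gd_hess_apply]
    have := (gd_fd_smooth (u := u) hu).continuous_fderiv (by simp)
    fun_prop
  exact (h.add h.matrix_transpose).const_smul (1/2 : ℝ)

lemma gdH_congr {n : ℕ} {u v : Euc n → ℝ} {x : Euc n} (h : u =ᶠ[𝓝 x] v) : gdH u x = gdH v x := by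
  have : hessMat u x = hessMat v x := by
    ext i j
    rw [gd_hess_apply, gd_hess_apply, h.fderiv.fderiv_eq]
  simp only [gdH, this]

def gdN {n : ℕ} (ν : Euc n →L[ℝ] ℝ) : SymMat n :=
  ⟨Matrix.of fun i j => ν (EuclideanSpace.single i 1) * ν (EuclideanSpace.single j 1), by
    rw [selfAdjoint.mem_iff]
    ext i j
    simp [Matrix.star_apply, mul_comm]⟩

lemma gd_bilin_N {n : ℕ} (ν : Euc n →L[ℝ] ℝ) (v w : Euc n) :
    bilin (gdN ν : Matrix (Fin n) (Fin n) ℝ) v w = ν v * ν w := by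
  conv_rhs => rw [gd_vec_sum v, gd_vec_sum w]
  simp only [map_sum, map_smul, bilin, gdN, smul_eq_mul, Finset.sum_mul_sum, Matrix.of_apply]
  refine Finset.sum_congr rfl fun i _ => Finset.sum_congr rfl fun j _ => ?_
  ring

lemma gd_N_psd {n : ℕ} (ν : Euc n →L[ℝ] ℝ) : (gdN ν : Matrix (Fin n) (Fin n) ℝ).PosSemidef :=
  gd_psd _ fun v => by rw [gd_bilin_N]; exact mul_self_nonneg _

lemma gd_N_cont {n : ℕ} : Continuous (gdN (n := n)) := by
  refine Continuous.subtype_mk ?_ _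
  refine continuous_matrix fun i j => ?_
  fun_prop

lemma gdH_add_smul {n : ℕ} {u ψ : Euc n → ℝ} (hu : ContDiff ℝ (⊤ : ℕ∞) u)
    (hψ : ContDiff ℝ (⊤ : ℕ∞) ψ) (ε : ℝ) (x : Euc n) :
    gdH (fun y => u y + ε * ψ y) x = gdH u x + ε • gdH ψ x := by
  have hs : ContDiff ℝ (⊤ : ℕ∞) (fun y => u y + ε * ψ y) := hu.add (contDiff_const.mul hψ)
  have hu1 := hu.differentiable (by simp)
  have hψ1 := hψ.differentiable (by simp)
  have hu2 := (gd_fd_smooth hu).differentiable (by simp)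
  have hψ2 := (gd_fd_smooth hψ).differentiable (by simp)
  have e1 : fderiv ℝ (fun y => u y + ε * ψ y) = fun y => fderiv ℝ u y + ε • fderiv ℝ ψ y := by
    ext1 y
    exact ((hu1 y).hasFDerivAt.add ((hψ1 y).hasFDerivAt.const_mul ε)).fderiv
  have e2 : fderiv ℝ (fderiv ℝ (fun y => u y + ε * ψ y)) x
      = fderiv ℝ (fderiv ℝ u) x + ε • fderiv ℝ (fderiv ℝ ψ) x := by
    rw [e1]
    exact ((hu2 x).hasFDerivAt.add ((hψ2 x).hasFDerivAt.const_smul ε)).fderiv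
  apply Subtype.ext
  rw [gdH_coe hs]
  have : ((gdH u x + ε • gdH ψ x : SymMat n) : Matrix (Fin n) (Fin n) ℝ)
    = (gdH u x : Matrix (Fin n) (Fin n) ℝ) + ε • (gdH ψ x : Matrix (Fin n) (Fin n) ℝ) := rfl
  rw [this, gdH_coe hu, gdH_coe hψ]
  ext i j
  simp [gd_hess_apply, e2]

lemma gd_fderiv_comp {n : ℕ} {u : Euc n → ℝ} (hu : ContDiff ℝ (⊤ : ℕ∞) u) {φ : ℝ → ℝ}
    (hφ : ContDiff ℝ (⊤ : ℕ∞) φ) (y : Euc n) :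
    fderiv ℝ (fun y => φ (u y)) y = deriv φ (u y) • fderiv ℝ u y := by
  have hu1 := hu.differentiable (by simp)
  have hφ1 := hφ.differentiable (by simp)
  exact ((hφ1 (u y)).hasDerivAt.comp_hasFDerivAt y (hu1 y).hasFDerivAt).fderiv

lemma gdH_comp {n : ℕ} {u : Euc n → ℝ} (hu : ContDiff ℝ (⊤ : ℕ∞) u) {φ : ℝ → ℝ}
    (hφ : ContDiff ℝ (⊤ : ℕ∞) φ) (x : Euc n) :
    gdH (fun y => φ (u y)) x = deriv φ (u x) • gdH u x + deriv (deriv φ) (u x) • gdN (fderiv ℝ u x) := by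
  have hs : ContDiff ℝ (⊤ : ℕ∞) (fun y => φ (u y)) := hφ.comp hu
  have hu1 := hu.differentiable (by simp)
  have hu2 := (gd_fd_smooth hu).differentiable (by simp)
  have hφ2 : ContDiff ℝ (⊤ : ℕ∞) (deriv φ) := by
    have h : ContDiff ℝ ((⊤ : ℕ∞) + 1 : WithTop ℕ∞) φ := hφ
    exact (contDiff_succ_iff_deriv.1 h).2.2
  have hφ3 := hφ2.differentiable (by simp)
  have e1 : fderiv ℝ (fun y => φ (u y)) = fun y => deriv φ (u y) • fderiv ℝ u y := by
    ext1 y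
    exact gd_fderiv_comp hu hφ y
  have e2 : fderiv ℝ (fderiv ℝ (fun y => φ (u y))) x
      = deriv φ (u x) • fderiv ℝ (fderiv ℝ u) x +
        (deriv (deriv φ) (u x) • fderiv ℝ u x).smulRight (fderiv ℝ u x) := by
    rw [e1]
    exact (((hφ3 (u x)).hasDerivAt.comp_hasFDerivAt x (hu1 x).hasFDerivAt).fun_smul (hu2 x).hasFDerivAt).fderiv
  apply Subtype.ext
  rw [gdH_coe hs]
  have : ((deriv φ (u x) • gdH u x + deriv (deriv φ) (u x) • gdN (fderiv ℝ u x) : SymMat n) : Matrix (Fin n) (Fin n) ℝ)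
    = deriv φ (u x) • (gdH u x : Matrix (Fin n) (Fin n) ℝ) + deriv (deriv φ) (u x) • (gdN (fderiv ℝ u x) : Matrix (Fin n) (Fin n) ℝ) := rfl
  rw [this, gdH_coe hu]
  ext i j
  simp [gd_hess_apply, e2, gdN, mul_assoc]

lemma gdH_norm_sq {n : ℕ} (D : ℝ) (x : Euc n) :
    gdH (fun y : Euc n => ‖y‖ ^ 2 - D) x = (2 : ℝ) • symOne n := by
  have hs : ContDiff ℝ (⊤ : ℕ∞) (fun y : Euc n => ‖y‖ ^ 2 - D) := (contDiff_norm_sq ℝ).sub contDiff_const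
  have e1 : fderiv ℝ (fun y : Euc n => ‖y‖ ^ 2 - D) = fun y => ((2 : ℝ) • innerSL ℝ) y := by
    ext1 y
    rw [fderiv_sub_const]
    exact (hasStrictFDerivAt_norm_sq y).hasFDerivAt.fderiv.trans (by simp [two_smul])
  have e2 : fderiv ℝ (fderiv ℝ (fun y : Euc n => ‖y‖ ^ 2 - D)) x = (2 : ℝ) • innerSL ℝ := by
    rw [e1]
    exact ((2 : ℝ) • innerSL ℝ : Euc n →L[ℝ] (Euc n →L[ℝ] ℝ)).fderiv
  apply Subtype.ext
  rw [gdH_coe hs]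
  have : (((2 : ℝ) • symOne n : SymMat n) : Matrix (Fin n) (Fin n) ℝ) = (2 : ℝ) • (1 : Matrix (Fin n) (Fin n) ℝ) := rfl
  rw [this]
  ext i j
  rw [gd_hess_apply, e2]
  change (2 : ℝ) * inner ℝ (EuclideanSpace.single i (1:ℝ) : Euc n) (EuclideanSpace.single j (1:ℝ)) = 2 * (1 : Matrix (Fin n) (Fin n) ℝ) i j
  simp [Matrix.one_apply, EuclideanSpace.inner_single_left, Pi.single_apply]

/-- adding a large multiple of `ν ⊗ ν`. -/
lemma gd_lambda {n : ℕ} {F : Set (SymMat n)} (hF : IsDirichletSet F) {B H : SymMat n}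
    (hB : B ∈ interior (raySet F)) (ν : Euc n →L[ℝ] ℝ)
    (h : ∀ v, ν v = 0 → bilin (B : Matrix (Fin n) (Fin n) ℝ) v v ≤ bilin (H : Matrix (Fin n) (Fin n) ℝ) v v) :
    ∃ l : ℝ, 0 < l ∧ H + l • gdN ν ∈ interior (raySet F) := by
  obtain ⟨δ, hδ, hB'⟩ := gd_int_sub hB
  set Q : SymMat n := H - (B - δ • symOne n) with hQ
  have hQb : ∀ v, bilin (Q : Matrix (Fin n) (Fin n) ℝ) v v =
      bilin (H : Matrix (Fin n) (Fin n) ℝ) v v - bilin (B : Matrix (Fin n) (Fin n) ℝ) v v + δ * ‖v‖ ^ 2 := by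
    intro v
    have : (Q : Matrix (Fin n) (Fin n) ℝ) = (H : Matrix (Fin n) (Fin n) ℝ) +
      (-1 : ℝ) • (B : Matrix (Fin n) (Fin n) ℝ) + δ • (1 : Matrix (Fin n) (Fin n) ℝ) := by
      have : Q = H + (-1 : ℝ) • B + δ • symOne n := by rw [hQ]; module
      rw [this]; rfl
    rw [this, gd_bilin_add, gd_bilin_add, gd_bilin_smul, gd_bilin_smul, gd_bilin_one]; ring
  have hcont : Continuous fun v : Euc n => bilin (Q : Matrix (Fin n) (Fin n) ℝ) v v := by
    unfold bilin; fun_prop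
  have hcomp : ∃ k : ℕ, sphere (0 : Euc n) 1 ⊆
      {v | 0 < bilin (Q : Matrix (Fin n) (Fin n) ℝ) v v + k * (ν v * ν v)} := by
    refine (isCompact_sphere (0 : Euc n) 1).elim_directed_cover
      (fun k : ℕ => {v | 0 < bilin (Q : Matrix (Fin n) (Fin n) ℝ) v v + k * (ν v * ν v)}) ?_ ?_ ?_
    · intro k
      exact isOpen_lt continuous_const (by fun_prop)
    · intro v hv
      have hv1 : ‖v‖ = 1 := by simpa using hv
      rw [mem_iUnion]
      by_cases h0 : ν v = 0
      · refine ⟨0, ?_⟩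
        have := h v h0
        simp only [mem_ofPred_eq, hQb, hv1]
        norm_num
        linarith
      · have hp : 0 < ν v * ν v := mul_self_pos.2 h0
        obtain ⟨k, hk⟩ := exists_nat_gt (-(bilin (Q : Matrix (Fin n) (Fin n) ℝ) v v) / (ν v * ν v))
        refine ⟨k, ?_⟩
        rw [div_lt_iff₀ hp] at hk
        simp only [mem_ofPred_eq]; linarith
    · refine Monotone.directed_le fun k k' hkk v hv => ?_
      simp only [mem_ofPred_eq] at hv ⊢
      have : (k : ℝ) ≤ k' := by exact_mod_cast hkk
      nlinarith [mul_self_nonneg (ν v)]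
  obtain ⟨k, hk⟩ := hcomp
  refine ⟨k + 1, by positivity, ?_⟩
  have hpsd : ((Q + (k + 1 : ℝ) • gdN ν : SymMat n) : Matrix (Fin n) (Fin n) ℝ).PosSemidef := by
    refine gd_psd _ fun v => ?_
    have e : ((Q + (k + 1 : ℝ) • gdN ν : SymMat n) : Matrix (Fin n) (Fin n) ℝ)
      = (Q : Matrix (Fin n) (Fin n) ℝ) + (k + 1 : ℝ) • (gdN ν : Matrix (Fin n) (Fin n) ℝ) := rfl
    rw [e, gd_bilin_add, gd_bilin_smul, gd_bilin_N]
    by_cases hv : v = 0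
    · subst hv; simp [bilin]
    · have hn : 0 < ‖v‖ := norm_pos_iff.2 hv
      have hs := hk (show ‖v‖⁻¹ • v ∈ sphere (0 : Euc n) 1 by simp [norm_smul, hn.ne'])
      have hb : bilin (Q : Matrix (Fin n) (Fin n) ℝ) (‖v‖⁻¹ • v) (‖v‖⁻¹ • v)
        = (‖v‖⁻¹) ^ 2 * bilin (Q : Matrix (Fin n) (Fin n) ℝ) v v := by
        simp only [bilin, Finset.mul_sum, PiLp.smul_apply, smul_eq_mul]
        refine Finset.sum_congr rfl fun i _ => Finset.sum_congr rfl fun j _ => ?_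
        ring
      simp only [mem_ofPred_eq, hb, map_smul, smul_eq_mul] at hs
      have h2 : 0 < (‖v‖⁻¹) ^ 2 * (bilin (Q : Matrix (Fin n) (Fin n) ℝ) v v + k * (ν v * ν v)) := by
        linarith
      have h3 := (pos_iff_pos_of_mul_pos h2).1 (by positivity)
      nlinarith [mul_self_nonneg (ν v)]
  have := gd_int_add hF hB' hpsd
  have e : B - δ • symOne n + (Q + (k + 1 : ℝ) • gdN ν) = H + (k + 1 : ℝ) • gdN ν := by rw [hQ]; abel
  rwa [e] at this

lemma gd_line_neg {n : ℕ} {f : Euc n → ℝ} {x w : Euc n} (hf : DifferentiableAt ℝ f x) (h0 : f x = 0)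
    (hw : fderiv ℝ f x w < 0) : ∀ᶠ t : ℝ in 𝓝[>] 0, f (x + t • w) < 0 := by
  have hl : HasDerivAt (fun t : ℝ => x + t • w) w 0 := by
    simpa using ((hasDerivAt_id (0:ℝ)).smul_const w).const_add x
  have hf' : HasFDerivAt f (fderiv ℝ f x) (x + (0:ℝ) • w) := by simpa using hf.hasFDerivAt
  have hd : HasDerivAt (fun t : ℝ => f (x + t • w)) (fderiv ℝ f x w) 0 :=
    HasFDerivAt.comp_hasDerivAt (x := (0:ℝ)) (f := fun t : ℝ => x + t • w) hf' hl
  have hs := (hasDerivAt_iff_tendsto_slope.1 hd).eventually_lt_const hw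
  have hs' := hs.filter_mono (nhdsWithin_mono 0 (fun t (ht : (0:ℝ) < t) => ht.ne'))
  filter_upwards [hs', self_mem_nhdsWithin] with t ht htpos
  have htpos : (0:ℝ) < t := htpos
  simp only [slope_def_field, zero_smul, add_zero, h0, sub_zero] at ht
  rw [div_lt_iff₀ htpos] at ht
  simpa using ht

lemma gd_line_tendsto {n : ℕ} (x w : Euc n) : Tendsto (fun t : ℝ => x + t • w) (𝓝[>] 0) (𝓝 x) := by
  have : Continuous fun t : ℝ => x + t • w := by fun_prop
  simpa using (this.tendsto 0).mono_left nhdsWithin_le_nhds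

lemma gd_first {n : ℕ} {r s : Euc n → ℝ} {x : Euc n} (hr : DifferentiableAt ℝ r x)
    (hs : DifferentiableAt ℝ s x) (hr0 : r x = 0) (hs0 : s x = 0)
    (himp : ∀ᶠ y in 𝓝 x, r y < 0 → s y ≤ 0) {w : Euc n} (hw : fderiv ℝ r x w < 0) :
    fderiv ℝ s x w ≤ 0 := by
  by_contra hcon
  push Not at hcon
  have h1 := gd_line_neg hr hr0 hw
  have h2 := gd_line_neg (f := fun y => - s y) (w := w) hs.neg (by simp [hs0]) (by
    rw [fderiv_fun_neg]; simpa using hcon)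
  have h3 := (gd_line_tendsto x w).eventually himp
  obtain ⟨t, ht1, ht2, ht3⟩ := (h1.and (h2.and h3)).exists
  have := ht3 ht1
  linarith

lemma gd_1d {g : ℝ → ℝ} (h0 : g 0 = 0) (h1 : deriv g 0 = 0) (h2 : 0 < deriv (deriv g) 0)
    (hd : ∀ᶠ t in 𝓝 0, DifferentiableAt ℝ g t) : ∀ᶠ t in 𝓝[≠] 0, 0 < g t := by
  set η := deriv (deriv g) 0 / 4 with hη
  have hη0 : 0 < η := by positivity
  have hsq : ∀ t : ℝ, HasDerivAt (fun t : ℝ => η * t ^ 2) (η * (2 * t)) t := fun t => by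
    simpa using (hasDerivAt_pow 2 t).const_mul η
  have hdd : DifferentiableAt ℝ (deriv g) 0 := differentiableAt_of_deriv_ne_zero h2.ne'
  have e1 : deriv (fun t => g t - η * t ^ 2) =ᶠ[𝓝 0] fun t => deriv g t - η * (2 * t) := by
    filter_upwards [hd] with t ht
    exact (ht.hasDerivAt.sub (hsq t)).deriv
  have e2 : deriv (deriv (fun t => g t - η * t ^ 2)) 0 = deriv (deriv g) 0 - η * (2 * 1) := by
    rw [e1.deriv_eq]
    exact (hdd.hasDerivAt.sub (((hasDerivAt_id (0:ℝ)).const_mul 2).const_mul η)).deriv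
  have hmin : IsLocalMin (fun t => g t - η * t ^ 2) 0 := by
    refine isLocalMin_of_deriv_deriv_pos ?_ ?_ ?_
    · rw [e2, hη]; linarith
    · rw [e1.eq_of_nhds, h1]; simp
    · exact hd.self_of_nhds.continuousAt.sub (by fun_prop)
  have hmin' : ∀ᶠ t in 𝓝[≠] 0, (fun t => g t - η * t ^ 2) 0 ≤ (fun t => g t - η * t ^ 2) t :=
    hmin.filter_mono nhdsWithin_le_nhds
  filter_upwards [hmin', self_mem_nhdsWithin] with t ht htne
  have : 0 < t ^ 2 := by have : t ≠ 0 := htne; positivity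
  simp only [h0] at ht
  nlinarith

lemma gd_curve {n : ℕ} {r : Euc n → ℝ} {x : Euc n} (hr : ContDiffAt ℝ 2 r x) (v N : Euc n) (a : ℝ) :
    deriv (fun t : ℝ => r (x + t • v + (a * t ^ 2) • N)) 0 = fderiv ℝ r x v ∧
    deriv (deriv (fun t : ℝ => r (x + t • v + (a * t ^ 2) • N))) 0
      = fderiv ℝ (fderiv ℝ r) x v v + 2 * a * fderiv ℝ r x N ∧
    ∀ᶠ t in 𝓝 (0:ℝ), DifferentiableAt ℝ (fun t : ℝ => r (x + t • v + (a * t ^ 2) • N)) t := by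
  set γ : ℝ → Euc n := fun t => x + t • v + (a * t ^ 2) • N with hγ
  have hγ0 : γ 0 = x := by simp [hγ]
  have hγd : ∀ t, HasDerivAt γ (v + (a * (2 * t)) • N) t := fun t => by
    have h1 : HasDerivAt (fun t : ℝ => a * t ^ 2) (a * (2 * t)) t := by
      simpa using (hasDerivAt_pow 2 t).const_mul a
    have h2 : HasDerivAt (fun t : ℝ => x + t • v) v t := by
      simpa using ((hasDerivAt_id t).smul_const v).const_add x
    exact h2.add (h1.smul_const N)
  have hγc : Tendsto γ (𝓝 0) (𝓝 x) := by
    have := (hγd 0).continuousAt.tendsto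
    rwa [hγ0] at this
  have hrd : ∀ᶠ y in 𝓝 x, DifferentiableAt ℝ r y := by
    filter_upwards [hr.eventually (by simp)] with y hy
    exact hy.differentiableAt (by simp)
  have hgd : ∀ᶠ t in 𝓝 (0:ℝ), HasDerivAt (fun t => r (γ t)) (fderiv ℝ r (γ t) (v + (a * (2 * t)) • N)) t := by
    filter_upwards [hγc.eventually hrd] with t ht
    exact HasFDerivAt.comp_hasDerivAt (x := t) (f := γ) ht.hasFDerivAt (hγd t)
  have hfd : DifferentiableAt ℝ (fderiv ℝ r) x :=
    (hr.fderiv_right (m := 1) (by norm_num)).differentiableAt (by simp)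
  refine ⟨?_, ?_, hgd.mono fun t ht => ht.differentiableAt⟩
  · have := hgd.self_of_nhds.deriv
    simpa [hγ0] using this
  · have e : deriv (fun t => r (γ t)) =ᶠ[𝓝 0] fun t => fderiv ℝ r (γ t) (v + (a * (2 * t)) • N) :=
      hgd.mono fun t ht => ht.deriv
    rw [e.deriv_eq]
    have h1 : HasDerivAt (fun t => fderiv ℝ r (γ t)) (fderiv ℝ (fderiv ℝ r) x v) 0 := by
      have h3 : HasFDerivAt (fderiv ℝ r) (fderiv ℝ (fderiv ℝ r) x) (γ 0) := by
        rw [hγ0]; exact hfd.hasFDerivAt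
      have h4 : HasDerivAt γ v 0 := by simpa using hγd 0
      exact HasFDerivAt.comp_hasDerivAt (x := (0:ℝ)) (f := γ) h3 h4
    have h2 : HasDerivAt (fun t : ℝ => v + (a * (2 * t)) • N) ((a * 2) • N) 0 := by
      have : HasDerivAt (fun t : ℝ => a * (2 * t)) (a * 2) 0 := by
        simpa using ((hasDerivAt_id (0:ℝ)).const_mul 2).const_mul a
      exact (this.smul_const N).const_add v
    have h5 := (h1.clm_apply h2).deriv
    rw [h5]
    rw [hγ0, map_smul]
    simp only [mul_zero, zero_smul, add_zero, smul_eq_mul]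
    ring

lemma gd_second {n : ℕ} {r s : Euc n → ℝ} {x : Euc n} (hr : ContDiffAt ℝ 2 r x)
    (hs : ContDiffAt ℝ 2 s x) (hr0 : r x = 0) (hs0 : s x = 0)
    (himp : ∀ᶠ y in 𝓝 x, r y < 0 → s y ≤ 0) (hdr : fderiv ℝ r x ≠ 0) (hds : fderiv ℝ s x ≠ 0) :
    ∃ c : ℝ, 0 < c ∧ (∀ v, fderiv ℝ r x v = c * fderiv ℝ s x v) ∧
      ∀ v, fderiv ℝ s x v = 0 → c * fderiv ℝ (fderiv ℝ s) x v v ≤ fderiv ℝ (fderiv ℝ r) x v v := by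
  have hr1 : DifferentiableAt ℝ r x := hr.differentiableAt (by simp)
  have hs1 : DifferentiableAt ℝ s x := hs.differentiableAt (by simp)
  obtain ⟨N₀, hN₀⟩ : ∃ N, fderiv ℝ r x N ≠ 0 := by
    by_contra hcon; push Not at hcon
    exact hdr (ContinuousLinearMap.ext hcon)
  obtain ⟨N, hN⟩ : ∃ N, fderiv ℝ r x N = 1 := ⟨(fderiv ℝ r x N₀)⁻¹ • N₀, by simp [hN₀]⟩
  have hker : ∀ v, fderiv ℝ r x v = 0 → fderiv ℝ s x v = 0 := by
    have key : ∀ v, fderiv ℝ r x v = 0 → ∀ k : ℝ, - fderiv ℝ s x N + k * fderiv ℝ s x v ≤ 0 := by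
      intro v hv k
      have := gd_first hr1 hs1 hr0 hs0 himp (w := -N + k • v) (by simp [hN, hv])
      simpa using this
    intro v hv
    by_contra hne
    have := key v hv ((1 + fderiv ℝ s x N) / fderiv ℝ s x v)
    rw [div_mul_cancel₀ _ hne] at this
    linarith
  have hprop : ∀ v, fderiv ℝ s x v = fderiv ℝ s x N * fderiv ℝ r x v := by
    intro v
    have := hker (v - (fderiv ℝ r x v) • N) (by simp [hN])
    simp only [map_sub, map_smul, smul_eq_mul] at this
    linarith
  set d := fderiv ℝ s x N with hd
  have hd0 : 0 ≤ d := by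
    have := gd_first hr1 hs1 hr0 hs0 himp (w := -N) (by simp [hN])
    simpa using this
  have hdne : d ≠ 0 := by
    intro h
    refine hds (ContinuousLinearMap.ext fun v => ?_)
    rw [hprop v, h]; simp
  have hdpos : 0 < d := lt_of_le_of_ne hd0 hdne.symm
  refine ⟨d⁻¹, inv_pos.2 hdpos, fun v => by rw [hprop v]; field_simp, fun v hv => ?_⟩
  have hrv : fderiv ℝ r x v = 0 := by
    rw [hprop v] at hv
    exact (mul_eq_zero.1 hv).resolve_left hdne
  by_contra hcon
  push Not at hcon
  set Hr := fderiv ℝ (fderiv ℝ r) x v v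
  set Hs := fderiv ℝ (fderiv ℝ s) x v v
  -- choose `2a` strictly between `-d⁻¹ Hs` and `-Hr`
  obtain ⟨b, hb1, hb2⟩ := exists_between (neg_lt_neg hcon)
  obtain ⟨hr1', hr2', hr3'⟩ := gd_curve hr v N (b/2)
  obtain ⟨hs1', hs2', hs3'⟩ := gd_curve hs v N (b/2)
  have A := gd_1d (g := fun t : ℝ => - r (x + t • v + (b/2 * t ^ 2) • N)) (by simp [hr0])
    (by rw [deriv.fun_neg, hr1', hrv]; simp)
    (by
      have : deriv (fun t : ℝ => - r (x + t • v + (b/2 * t ^ 2) • N))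
        = fun t => - deriv (fun t : ℝ => r (x + t • v + (b/2 * t ^ 2) • N)) t := by
        ext t; exact deriv.fun_neg
      rw [this, deriv.fun_neg, hr2', hN]; linarith)
    (hr3'.mono fun t ht => ht.fun_neg)
  have B := gd_1d (g := fun t : ℝ => s (x + t • v + (b/2 * t ^ 2) • N)) (by simp [hs0])
    (by rw [hs1', hv])
    (by
      rw [hs2']
      have h1 : d * (-(d⁻¹ * Hs)) < d * b := mul_lt_mul_of_pos_left hb1 hdpos
      have h2 : d * (-(d⁻¹ * Hs)) = - Hs := by field_simp
      rw [← hd]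
      linarith)
    hs3'
  have hγ : Tendsto (fun t : ℝ => x + t • v + (b/2 * t ^ 2) • N) (𝓝[≠] 0) (𝓝 x) := by
    have : Continuous (fun t : ℝ => x + t • v + (b/2 * t ^ 2) • N) := by fun_prop
    simpa using (this.tendsto 0).mono_left nhdsWithin_le_nhds
  obtain ⟨t, h1, h2, h3⟩ := (A.and (B.and (hγ.eventually himp))).exists
  have := h3 (by linarith)
  linarith

lemma gd_frontier_zero {n : ℕ} {Ω : Set (Euc n)} (hΩ : IsOpen Ω) {η : Euc n → ℝ} {y : Euc n}
    (hη : ContinuousAt η y)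
    (h1 : ∀ᶠ z in 𝓝 y, z ∈ Ω → η z ≤ 0) (h2 : y ∉ Ω → 0 ≤ η y) (hy : y ∈ frontier Ω) : η y = 0 := by
  have hyn : y ∉ Ω := by rw [hΩ.frontier_eq] at hy; exact hy.2
  have hyc : y ∈ closure Ω := hy.1
  refine le_antisymm ?_ (h2 hyn)
  by_contra hcon
  push Not at hcon
  have h3 := hη.eventually (lt_mem_nhds hcon)
  obtain ⟨z, ⟨hz1, hz2⟩, hz3⟩ := mem_closure_iff_nhds.1 hyc _ (h1.and h3)
  have := hz1 hz3
  linarith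

lemma gd_add_ne {n : ℕ} {Ω : Set (Euc n)} (hΩ : IsOpen Ω) {f g : Euc n → ℝ}
    (hf : ContDiff ℝ (⊤ : ℕ∞) f) (hg : ContDiff ℝ (⊤ : ℕ∞) g)
    (hf1 : ∀ y ∈ Ω, f y ≤ 0) (hf2 : ∀ y ∉ Ω, 0 ≤ f y)
    (hg1 : ∀ y ∈ Ω, g y ≤ 0) (hg2 : ∀ y ∉ Ω, 0 ≤ g y) {y : Euc n} (hy : y ∈ frontier Ω)
    (hd : fderiv ℝ f y ≠ 0) : fderiv ℝ (fun z => f z + g z) y ≠ 0 := by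
  have hfd : DifferentiableAt ℝ f y := hf.differentiable (by simp) y
  have hgd : DifferentiableAt ℝ g y := hg.differentiable (by simp) y
  have hf0 := gd_frontier_zero hΩ hf.continuous.continuousAt (Eventually.of_forall hf1) (hf2 y) hy
  have hg0 := gd_frontier_zero hΩ hg.continuous.continuousAt (Eventually.of_forall hg1) (hg2 y) hy
  obtain ⟨N, hN⟩ : ∃ N, fderiv ℝ f y N < 0 := by
    by_contra hcon; push Not at hcon
    refine hd (ContinuousLinearMap.ext fun v => ?_)
    have h1 := hcon v
    have h2 := hcon (-v)
    rw [map_neg] at h2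
    simp; linarith
  have := gd_first hfd hgd hf0 hg0 (Eventually.of_forall fun z hz => hg1 z (by
    by_contra hzn; have := hf2 z hzn; linarith)) hN
  intro h0
  rw [fderiv_fun_add hfd hgd] at h0
  have h1 := DFunLike.congr_fun h0 N
  simp at h1
  linarith

lemma gd_smooth_mul {n : ℕ} {f ρ : Euc n → ℝ} {U : Set (Euc n)} (hU : IsOpen U)
    (hf : ContDiff ℝ (⊤ : ℕ∞) f) (hρ : ContDiffOn ℝ (⊤ : ℕ∞) ρ U) (hs : tsupport f ⊆ U) :
    ContDiff ℝ (⊤ : ℕ∞) (fun y => f y * ρ y) := by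
  rw [contDiff_iff_contDiffAt]
  intro y
  by_cases hy : y ∈ U
  · exact hf.contDiffAt.mul (hρ.contDiffAt (hU.mem_nhds hy))
  · have : y ∉ tsupport f := fun h => hy (hs h)
    have h0 : (fun y => f y * ρ y) =ᶠ[𝓝 y] fun _ => 0 := by
      filter_upwards [notMem_tsupport_iff_eventuallyEq.1 this] with z hz
      rw [hz]; simp
    exact contDiffAt_const.congr_of_eventuallyEq h0

lemma gd_patch {n : ℕ} {Ω : Set (Euc n)} (hΩ : IsOpen Ω) (hb : Bornology.IsBounded Ω)
    (hsb : HasSmoothBoundary Ω) :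
    ∃ r : Euc n → ℝ, ContDiff ℝ (⊤ : ℕ∞) r ∧ (∀ y ∈ Ω, r y < 0) ∧ (∀ y ∉ Ω, 0 ≤ r y) ∧
      ∀ y ∈ frontier Ω, fderiv ℝ r y ≠ 0 := by
  have hK : IsCompact (closure Ω) := hb.isCompact_closure
  have main : ∃ r : Euc n → ℝ, ContDiff ℝ (⊤ : ℕ∞) r ∧ (∀ y ∈ Ω, r y ≤ 0) ∧ (∀ y ∉ Ω, 0 ≤ r y) ∧
      (∀ y ∈ closure Ω, y ∈ Ω → r y < 0) ∧ ∀ y ∈ closure Ω, y ∈ frontier Ω → fderiv ℝ r y ≠ 0 := by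
    refine hK.induction_on (p := fun s => ∃ r : Euc n → ℝ, ContDiff ℝ (⊤ : ℕ∞) r ∧ (∀ y ∈ Ω, r y ≤ 0) ∧
      (∀ y ∉ Ω, 0 ≤ r y) ∧
      (∀ y ∈ s, y ∈ Ω → r y < 0) ∧ ∀ y ∈ s, y ∈ frontier Ω → fderiv ℝ r y ≠ 0) ?_ ?_ ?_ ?_
    · exact ⟨fun _ => 0, contDiff_const, by simp, by simp, by simp, by simp⟩
    · rintro s t hst ⟨r, h1, h2, h3, h4, h5⟩
      exact ⟨r, h1, h2, h3, fun y hy => h4 y (hst hy), fun y hy => h5 y (hst hy)⟩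
    · rintro s t ⟨r, h1, h2, h3, h4, h5⟩ ⟨r', h1', h2', h3', h4', h5'⟩
      refine ⟨fun y => r y + r' y, h1.add h1', fun y hy => add_nonpos (h2 y hy) (h2' y hy),
        fun y hy => add_nonneg (h3 y hy) (h3' y hy), ?_, ?_⟩
      · rintro y (hy | hy) hyΩ
        · exact add_neg_of_neg_of_nonpos (h4 y hy hyΩ) (h2' y hyΩ)
        · exact add_neg_of_nonpos_of_neg (h2 y hyΩ) (h4' y hy hyΩ)
      · rintro y (hy | hy) hyf
        · exact gd_add_ne hΩ h1 h1' h2 h3 h2' h3' hyf (h5 y hy hyf)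
        · have := gd_add_ne hΩ h1' h1 h2' h3' h2 h3 hyf (h5' y hy hyf)
          simpa only [add_comm] using this
    · intro x hx
      obtain ⟨U, ρ, hxU, hU, hρ, hneg, hpos, hdρ⟩ : ∃ (U : Set (Euc n)) (ρ : Euc n → ℝ), x ∈ U ∧ IsOpen U ∧
          ContDiffOn ℝ (⊤ : ℕ∞) ρ U ∧ (∀ y ∈ U, y ∈ Ω → ρ y < 0) ∧ (∀ y ∈ U, y ∉ Ω → 0 ≤ ρ y) ∧
          (∀ y ∈ U, y ∈ frontier Ω → fderiv ℝ ρ y ≠ 0) := by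
        by_cases hxΩ : x ∈ Ω
        · refine ⟨Ω, fun _ => -1, hxΩ, hΩ, contDiffOn_const, by simp, fun y hy hy' => absurd hy hy', ?_⟩
          intro y hy hyf
          rw [hΩ.frontier_eq] at hyf
          exact absurd hy hyf.2
        · have hxf : x ∈ frontier Ω := by rw [hΩ.frontier_eq]; exact ⟨hx, hxΩ⟩
          obtain ⟨U, ρ, hxU, hU, hρ, hset, hd⟩ := hsb x hxf
          refine ⟨U, ρ, hxU, hU, hρ, fun y hy hyΩ => ?_, fun y hy hyΩ => ?_, fun y hy _ => hd y hy⟩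
          · have : y ∈ {y ∈ U | ρ y < 0} := hset ▸ ⟨hyΩ, hy⟩
            exact this.2
          · by_contra hcon
            push Not at hcon
            have : y ∈ Ω ∩ U := by rw [hset]; exact ⟨hy, hcon⟩
            exact hyΩ this.1
      obtain ⟨R, hR, hball⟩ := Metric.isOpen_iff.1 hU x hxU
      let f : ContDiffBump x := ⟨R/4, R/2, by positivity, by linarith⟩
      have hsupp : tsupport f ⊆ U := by
        rw [f.tsupport_eq]
        exact (closedBall_subset_ball (by change R/2 < R; linarith)).trans hball
      have hone : ∀ y ∈ ball x (R/4), f y = 1 := fun y hy =>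
        f.one_of_mem_closedBall (ball_subset_closedBall hy)
      have hsub : ball x (R/4) ⊆ U := (ball_subset_ball (by linarith)).trans hball
      have hzero : ∀ y ∉ U, f y = 0 := fun y hy => image_eq_zero_of_notMem_tsupport fun h => hy (hsupp h)
      refine ⟨ball x (R/4), mem_nhdsWithin_of_mem_nhds (ball_mem_nhds x (by positivity)),
        fun y => f y * ρ y, gd_smooth_mul hU f.contDiff hρ hsupp, ?_, ?_, ?_, ?_⟩
      · intro y hy
        by_cases hyU : y ∈ U
        · exact mul_nonpos_of_nonneg_of_nonpos f.nonneg (hneg y hyU hy).le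
        · simp [hzero y hyU]
      · intro y hy
        by_cases hyU : y ∈ U
        · exact mul_nonneg f.nonneg (hpos y hyU hy)
        · simp [hzero y hyU]
      · intro y hy hyΩ
        simp only [hone y hy, one_mul]
        exact hneg y (hsub hy) hyΩ
      · intro y hy hyf
        have : (fun y => f y * ρ y) =ᶠ[𝓝 y] ρ := by
          filter_upwards [isOpen_ball.mem_nhds hy] with z hz
          rw [hone z hz, one_mul]
        rw [this.fderiv_eq]
        exact hdρ y (hsub hy) hyf
  obtain ⟨r, h1, h2, h3, h4, h5⟩ := main
  exact ⟨r, h1, fun y hy => h4 y (subset_closure hy) hy, h3, fun y hy => h5 y hy.1 hy⟩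

lemma gd_exp_le {t : ℝ} (ht : t ≤ 0) :
    deriv expNegInvGlue t = 0 ∧ deriv (deriv expNegInvGlue) t = 0 := by
  have hmin : ∀ t ≤ (0:ℝ), deriv expNegInvGlue t = 0 := fun t ht => by
    have : IsLocalMin expNegInvGlue t := Eventually.of_forall fun s => by
      rw [expNegInvGlue.zero_of_nonpos ht]; exact expNegInvGlue.nonneg s
    exact this.deriv_eq_zero
  refine ⟨hmin t ht, ?_⟩
  have : IsLocalMin (deriv expNegInvGlue) t := Eventually.of_forall fun s => by
    rw [hmin t ht]; exact expNegInvGlue.monotone.deriv_nonneg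
  exact this.deriv_eq_zero

lemma gd_exp_pos {t : ℝ} (ht : 0 < t) :
    deriv expNegInvGlue t = t⁻¹ ^ 2 * Real.exp (-t⁻¹) ∧
    deriv (deriv expNegInvGlue) t = (t⁻¹ ^ 2 - 2 * t⁻¹) * (t⁻¹ ^ 2 * Real.exp (-t⁻¹)) := by
  have hd : ∀ t : ℝ, 0 < t → HasDerivAt (fun s : ℝ => Real.exp (-s⁻¹)) (t⁻¹ ^ 2 * Real.exp (-t⁻¹)) t := by
    intro t ht
    have := (hasDerivAt_inv ht.ne').fun_neg.exp
    convert this using 1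
    field_simp
  have h1 : ∀ t : ℝ, 0 < t → deriv expNegInvGlue t = t⁻¹ ^ 2 * Real.exp (-t⁻¹) := by
    intro t ht
    have : expNegInvGlue =ᶠ[𝓝 t] fun s : ℝ => Real.exp (-s⁻¹) := by
      filter_upwards [lt_mem_nhds ht] with s hs
      simp [expNegInvGlue, not_le.2 hs]
    rw [this.deriv_eq, (hd t ht).deriv]
  refine ⟨h1 t ht, ?_⟩
  have : deriv expNegInvGlue =ᶠ[𝓝 t] fun s : ℝ => s⁻¹ ^ 2 * Real.exp (-s⁻¹) := by
    filter_upwards [lt_mem_nhds ht] with s hs using h1 s hs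
  rw [this.deriv_eq]
  have h2 := (((hasDerivAt_inv ht.ne').fun_pow 2).mul (hd t ht)).deriv
  refine Eq.trans h2 ?_
  norm_num
  ring

lemma gd_boundary_lambda {n : ℕ} {F : Set (SymMat n)} (hF : IsDirichletSet F) {Ω : Set (Euc n)}
    (hΩ : IsOpen Ω) {r : Euc n → ℝ} (hr : ContDiff ℝ (⊤ : ℕ∞) r)
    (hr1 : ∀ y ∈ Ω, r y < 0) (hr2 : ∀ y ∉ Ω, 0 ≤ r y) {x : Euc n} (hx : x ∈ frontier Ω)
    (hdr : fderiv ℝ r x ≠ 0) (hc : StrictlyConvexAt (raySet F) Ω x) :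
    ∃ l : ℝ, 0 < l ∧ gdH r x + l • gdN (fderiv ℝ r x) ∈ interior (raySet F) := by
  obtain ⟨U, ρ, hxU, ⟨hU, hρ, hset, hdρ⟩, B, hB, hBρ⟩ := hc
  have hρc : ContDiffAt ℝ (⊤ : ℕ∞) ρ x := hρ.contDiffAt (hU.mem_nhds hxU)
  have hneg : ∀ y ∈ U, y ∈ Ω → ρ y < 0 := fun y hy hyΩ => by
    have : y ∈ {y ∈ U | ρ y < 0} := hset ▸ ⟨hyΩ, hy⟩
    exact this.2
  have hpos : ∀ y ∈ U, y ∉ Ω → 0 ≤ ρ y := fun y hy hyΩ => by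
    by_contra hcon
    push Not at hcon
    have : y ∈ Ω ∩ U := by rw [hset]; exact ⟨hy, hcon⟩
    exact hyΩ this.1
  have hr0 := gd_frontier_zero hΩ hr.continuous.continuousAt
    (Eventually.of_forall fun y hy => (hr1 y hy).le) (hr2 x) hx
  have hUev : ∀ᶠ z in 𝓝 x, z ∈ U := hU.mem_nhds hxU
  have hρ0 := gd_frontier_zero hΩ hρc.continuousAt
    (hUev.mono fun z hz hzΩ => (hneg z hz hzΩ).le) (hpos x hxU) hx
  have h2 : (2 : WithTop ℕ∞) ≤ ((⊤ : ℕ∞) : WithTop ℕ∞) := WithTop.coe_le_coe.2 le_top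
  obtain ⟨c, hc, hprop, hineq⟩ := gd_second (hr.contDiffAt.of_le h2) (hρc.of_le h2) hr0 hρ0
    (hUev.mono fun z hz hzr => (hneg z hz (by
      by_contra hzn; have := hr2 z hzn; linarith)).le) hdr (hdρ x hxU)
  refine gd_lambda hF (gd_int_smul hB hc) _ fun v hv => ?_
  have hv' : fderiv ℝ ρ x v = 0 := by
    rw [hprop v] at hv
    exact (mul_eq_zero.1 hv).resolve_left hc.ne'
  have e : ((c • B : SymMat n) : Matrix (Fin n) (Fin n) ℝ) = c • (B : Matrix (Fin n) (Fin n) ℝ) := rfl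
  rw [e, gd_bilin_smul, ← hBρ v v hv' hv', gd_bilin_hess, gdH_coe hr, gd_bilin_hess]
  exact hineq v hv'

/-- A defining function with Hessian in the ray set, strictly so near the boundary. -/
lemma gd_step {n : ℕ} {F : Set (SymMat n)} (hF : IsDirichletSet F) {Ω : Set (Euc n)}
    (hΩ : IsOpen Ω) (hb : Bornology.IsBounded Ω) {r : Euc n → ℝ} (hr : ContDiff ℝ (⊤ : ℕ∞) r)
    (hr1 : ∀ y ∈ Ω, r y < 0) (hr2 : ∀ y ∉ Ω, 0 ≤ r y)
    (hdr : ∀ x ∈ frontier Ω, fderiv ℝ r x ≠ 0)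
    (hc : ∀ x ∈ frontier Ω, StrictlyConvexAt (raySet F) Ω x) :
    ∃ a : ℝ, 0 < a ∧ ∃ u : Euc n → ℝ, ContDiff ℝ (⊤ : ℕ∞) u ∧ (∀ y ∈ Ω, u y < 0) ∧
      (∀ y ∉ Ω, 0 ≤ u y) ∧ (∀ x ∈ frontier Ω, fderiv ℝ u x ≠ 0) ∧
      (∀ y ∈ closure Ω, gdH u y ∈ raySet F) ∧
      (∀ y ∈ closure Ω, -a < r y → gdH u y ∈ interior (raySet F)) := by
  have hK : IsCompact (closure Ω) := hb.isCompact_closure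
  have hr0 : ∀ x ∈ frontier Ω, r x = 0 := fun x hx => gd_frontier_zero hΩ hr.continuous.continuousAt
    (Eventually.of_forall fun y hy => (hr1 y hy).le) (hr2 x) hx
  have hmem : ∀ x ∈ closure Ω, x ∉ frontier Ω → x ∈ Ω := fun x hx hxf => by
    by_contra hxn
    exact hxf (by rw [hΩ.frontier_eq]; exact ⟨hx, hxn⟩)
  have hrc : ∀ x ∈ closure Ω, r x ≤ 0 := fun x hx => by
    by_cases hxf : x ∈ frontier Ω
    · exact (hr0 x hxf).le
    · exact (hr1 x (hmem x hx hxf)).le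
  have hcontl : ∀ l : ℝ, Continuous fun y => gdH r y + l • gdN (fderiv ℝ r y) := fun l => by
    have h1 := gdH_cont hr
    have h2 := gd_N_cont.comp (gd_fd_smooth hr).continuous
    exact h1.add (h2.const_smul l)
  obtain ⟨l, hl, hlf⟩ : ∃ l : ℝ, 0 < l ∧ ∀ x ∈ frontier Ω,
      gdH r x + l • gdN (fderiv ℝ r x) ∈ interior (raySet F) := by
    have hmono : ∀ l l' : ℝ, l ≤ l' → ∀ x, gdH r x + l • gdN (fderiv ℝ r x) ∈ interior (raySet F) →
        gdH r x + l' • gdN (fderiv ℝ r x) ∈ interior (raySet F) := by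
      intro l l' hll x hx
      have := gd_int_add hF hx (gd_psd_smul (gd_N_psd (fderiv ℝ r x)) (sub_nonneg.2 hll))
      have e : gdH r x + l • gdN (fderiv ℝ r x) + (l' - l) • gdN (fderiv ℝ r x)
        = gdH r x + l' • gdN (fderiv ℝ r x) := by module
      rwa [e] at this
    have hKf : IsCompact (frontier Ω) := hK.of_isClosed_subset isClosed_frontier frontier_subset_closure
    refine hKf.induction_on (p := fun s => ∃ l : ℝ, 0 < l ∧ ∀ x ∈ s,
      gdH r x + l • gdN (fderiv ℝ r x) ∈ interior (raySet F)) ⟨1, one_pos, by simp⟩ ?_ ?_ ?_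
    · rintro s t hst ⟨l, hl, h⟩
      exact ⟨l, hl, fun x hx => h x (hst hx)⟩
    · rintro s t ⟨l, hl, h⟩ ⟨l', hl', h'⟩
      refine ⟨max l l', lt_max_of_lt_left hl, ?_⟩
      rintro x (hx | hx)
      · exact hmono _ _ (le_max_left _ _) x (h x hx)
      · exact hmono _ _ (le_max_right _ _) x (h' x hx)
    · intro x hx
      obtain ⟨l, hl, h⟩ := gd_boundary_lambda hF hΩ hr hr1 hr2 hx (hdr x hx) (hc x hx)
      exact ⟨_, mem_nhdsWithin_of_mem_nhds
        ((hcontl l).continuousAt.preimage_mem_nhds (isOpen_interior.mem_nhds h)), l, hl, fun y hy => hy⟩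
  set W : Set (Euc n) := (fun y => gdH r y + l • gdN (fderiv ℝ r y)) ⁻¹' interior (raySet F) with hW
  have hWo : IsOpen W := isOpen_interior.preimage (hcontl l)
  obtain ⟨a₀, ha₀, hKa⟩ : ∃ a₀ : ℝ, 0 < a₀ ∧ ∀ y ∈ closure Ω \ W, r y ≤ -a₀ := by
    have hKW : IsCompact (closure Ω \ W) := hK.diff hWo
    rcases (closure Ω \ W).eq_empty_or_nonempty with he | hne
    · exact ⟨1, one_pos, by simp [he]⟩
    · obtain ⟨z, hz, hmax⟩ := hKW.exists_isMaxOn hne hr.continuous.continuousOn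
      refine ⟨-r z, ?_, fun y hy => by simpa using hmax hy⟩
      have : z ∈ Ω := hmem z hz.1 fun hzf => hz.2 (hlf z hzf)
      linarith [hr1 z this]
  set a := min a₀ (l + 3)⁻¹ with ha
  have hapos : 0 < a := lt_min ha₀ (by positivity)
  have hainv : l + 3 ≤ a⁻¹ := by
    rw [le_inv_comm₀ (by positivity) hapos]; exact min_le_right _ _
  have hinW : ∀ y ∈ closure Ω, -a < r y → y ∈ W := fun y hy hya => by
    by_contra hyW
    have := hKa y ⟨hy, hyW⟩
    have : a ≤ a₀ := min_le_left _ _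
    linarith
  have hEc : ContDiff ℝ (⊤ : ℕ∞) expNegInvGlue := expNegInvGlue.contDiff
  set φ : ℝ → ℝ := fun t => expNegInvGlue (t + a) - expNegInvGlue a with hφd
  have hφ : ContDiff ℝ (⊤ : ℕ∞) φ := (hEc.comp (contDiff_id.add contDiff_const)).sub contDiff_const
  have hφ1 : deriv φ = fun t => deriv expNegInvGlue (t + a) := by
    ext t
    rw [hφd, deriv_sub_const, deriv_comp_add_const]
  have hφ2 : ∀ t, deriv (deriv φ) t = deriv (deriv expNegInvGlue) (t + a) := by
    intro t
    rw [hφ1, deriv_comp_add_const]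
  have hφpos : ∀ t, -a < t → 0 < deriv φ t := fun t ht => by
    have h0 : 0 < t + a := by linarith
    rw [hφ1]
    simp only
    rw [(gd_exp_pos h0).1]; positivity
  have hφl : ∀ t, -a < t → t ≤ 0 → l * deriv φ t ≤ deriv (deriv φ) t := fun t ht ht0 => by
    have h0 : 0 < t + a := by linarith
    rw [hφ2, hφ1]
    simp only
    rw [(gd_exp_pos h0).1, (gd_exp_pos h0).2]
    have h1 : l + 3 ≤ (t + a)⁻¹ := hainv.trans (inv_anti₀ h0 (by linarith))
    have h2 : l ≤ (t + a)⁻¹ ^ 2 - 2 * (t + a)⁻¹ := by nlinarith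
    exact mul_le_mul_of_nonneg_right h2 (by positivity)
  have hstrict : ∀ t, -a < t → t ≤ 0 → ∀ y, r y = t → y ∈ W → gdH (fun y => φ (r y)) y ∈ interior (raySet F) := by
    intro t ht ht0 y hyt hyW
    have h1 := gd_int_add hF (gd_int_smul (show _ ∈ interior (raySet F) from hyW) (hφpos t ht))
      (gd_psd_smul (gd_N_psd (fderiv ℝ r y)) (sub_nonneg.2 (hφl t ht ht0)))
    rw [gdH_comp hr hφ, hyt]
    have e : deriv φ t • (gdH r y + l • gdN (fderiv ℝ r y)) +
      (deriv (deriv φ) t - l * deriv φ t) • gdN (fderiv ℝ r y)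
      = deriv φ t • gdH r y + deriv (deriv φ) t • gdN (fderiv ℝ r y) := by module
    simpa only [e] using h1
  have hflat : ∀ y, r y ≤ -a → gdH (fun y => φ (r y)) y = 0 := by
    intro y hy
    rw [gdH_comp hr hφ, hφ2, hφ1]
    simp only
    rw [(gd_exp_le (by linarith : r y + a ≤ 0)).1, (gd_exp_le (by linarith : r y + a ≤ 0)).2]
    simp
  refine ⟨a, hapos, fun y => φ (r y), hφ.comp hr, ?_, ?_, ?_, ?_, ?_⟩
  · intro y hy
    have h1 := hr1 y hy
    simp only [hφd, sub_neg]
    have hsm : StrictMonoOn expNegInvGlue (Ici 0) := by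
      refine strictMonoOn_of_deriv_pos (convex_Ici 0) hEc.continuous.continuousOn fun t ht => ?_
      rw [interior_Ici] at ht
      have ht' : 0 < t := ht
      rw [(gd_exp_pos ht').1]; positivity
    rcases le_total 0 (r y + a) with h | h
    · exact hsm h hapos.le (by linarith)
    · rw [expNegInvGlue.zero_of_nonpos h]; exact expNegInvGlue.pos_of_pos hapos
  · intro y hy
    have h1 := hr2 y hy
    simp only [hφd, sub_nonneg]
    exact expNegInvGlue.monotone (by linarith)
  · intro x hx
    rw [gd_fderiv_comp hr hφ]
    exact smul_ne_zero (hφpos _ (by rw [hr0 x hx]; linarith)).ne' (hdr x hx)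
  · intro y hy
    rcases le_or_gt (r y) (-a) with h | h
    · rw [hflat y h]; exact gd_zero_mem hF
    · exact interior_subset (hstrict (r y) h (hrc y hy) y rfl (hinW y hy h))
  · intro y hy h
    exact hstrict (r y) h (hrc y hy) y rfl (hinW y hy h)

/-- Theorem 5.12: a bounded domain with smooth, strictly `F⃗`-convex
boundary admits a global defining function which is strictly of type `F⃗` on the
closure, with the additional quantitative property (5.4). -/
theorem global_defining_function {n : ℕ} (F : Set (SymMat n)) (hF : IsDirichletSet F)
    (Ω : Set (Euc n)) (hΩo : IsOpen Ω) (hΩb : Bornology.IsBounded Ω)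
    (hsb : HasSmoothBoundary Ω)
    (hconv : ∀ x ∈ frontier Ω, StrictlyConvexAt (raySet F) Ω x) :
    ∃ V : Set (Euc n), IsOpen V ∧ closure Ω ⊆ V ∧ ∃ ρ : Euc n → ℝ,
      ContDiffOn ℝ (⊤ : ℕ∞) ρ V ∧ Ω = {x ∈ V | ρ x < 0} ∧
      (∀ x ∈ frontier Ω, fderiv ℝ ρ x ≠ 0) ∧
      (∀ x ∈ closure Ω,
        ∃ A ∈ interior (raySet F), (A : Matrix (Fin n) (Fin n) ℝ) = hessMat ρ x) ∧
      ∃ ε : ℝ, 0 < ε ∧ ∃ R : ℝ, 0 < R ∧ ∀ C : ℝ, R ≤ C → ∀ x ∈ closure Ω,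
        ∃ A ∈ F, (A : Matrix (Fin n) (Fin n) ℝ)
          = C • (hessMat ρ x - ε • (1 : Matrix (Fin n) (Fin n) ℝ)) := by
  obtain ⟨r, hr, hr1, hr2, hdr⟩ := gd_patch hΩo hΩb hsb
  obtain ⟨a, ha, u, hu, hu1, hu2, hdu, hray, hint⟩ := gd_step hF hΩo hΩb hr hr1 hr2 hdr hconv
  have hK : IsCompact (closure Ω) := hΩb.isCompact_closure
  obtain ⟨M, hM⟩ := hK.isBounded.exists_norm_le
  set D := M ^ 2 with hD
  set g : Euc n → ℝ := fun y => ‖y‖ ^ 2 - D with hg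
  have hgs : ContDiff ℝ (⊤ : ℕ∞) g := (contDiff_norm_sq ℝ).sub contDiff_const
  set χ : Euc n → ℝ := fun y => Real.smoothTransition (-(3 / a) * r y - 1) with hχ
  have hχs : ContDiff ℝ (⊤ : ℕ∞) χ :=
    Real.smoothTransition.contDiff.comp ((contDiff_const.mul hr).sub contDiff_const)
  have hχ0 : ∀ y, -(a / 3) ≤ r y → χ y = 0 := fun y hy => by
    apply Real.smoothTransition.zero_of_nonpos
    have : 3 / a * (-(a / 3)) ≤ 3 / a * r y := mul_le_mul_of_nonneg_left hy (by positivity)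
    have e : 3 / a * (-(a / 3)) = -1 := by field_simp
    linarith
  have hχ1 : ∀ y, r y ≤ -(2 * a / 3) → χ y = 1 := fun y hy => by
    apply Real.smoothTransition.one_of_one_le
    have : 3 / a * r y ≤ 3 / a * (-(2 * a / 3)) := mul_le_mul_of_nonneg_left hy (by positivity)
    have e : 3 / a * (-(2 * a / 3)) = -2 := by field_simp
    linarith
  set ψ : Euc n → ℝ := fun y => χ y * g y with hψ
  have hψs : ContDiff ℝ (⊤ : ℕ∞) ψ := hχs.mul hgs
  have hK2 : IsCompact (closure Ω ∩ {y | -(2 * a / 3) ≤ r y}) :=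
    hK.inter_right (isClosed_le continuous_const hr.continuous)
  have htube : ∀ᶠ ε : ℝ in 𝓝 0, ∀ y ∈ closure Ω ∩ {y | -(2 * a / 3) ≤ r y},
      gdH u y + ε • gdH ψ y ∈ interior (raySet F) := by
    refine hK2.eventually_forall_of_forall_eventually fun y hy => ?_
    have h1 := gdH_cont hu
    have h2 := gdH_cont hψs
    have hcont : Continuous fun z : ℝ × Euc n => gdH u z.2 + z.1 • gdH ψ z.2 :=
      (h1.comp continuous_snd).add (continuous_fst.smul (h2.comp continuous_snd))
    refine hcont.continuousAt.eventually (isOpen_interior.mem_nhds ?_)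
    have hya : -(2 * a / 3) ≤ r y := hy.2
    simpa using hint y hy.1 (by linarith)
  obtain ⟨ε, hεt, hε⟩ := ((htube.filter_mono nhdsWithin_le_nhds).and
    (self_mem_nhdsWithin : ∀ᶠ ε : ℝ in 𝓝[>] 0, ε ∈ Ioi (0:ℝ))).exists
  have hε : 0 < ε := hε
  set ρ : Euc n → ℝ := fun y => u y + ε * ψ y with hρ
  have hρs : ContDiff ℝ (⊤ : ℕ∞) ρ := hu.add (contDiff_const.mul hψs)
  have hHess : ∀ y ∈ closure Ω, gdH ρ y ∈ interior (raySet F) := by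
    intro y hy
    rw [hρ, gdH_add_smul hu hψs]
    rcases le_or_gt (-(2 * a / 3)) (r y) with h | h
    · exact hεt y ⟨hy, h⟩
    · have e : ψ =ᶠ[𝓝 y] g := by
        filter_upwards [(isOpen_lt hr.continuous continuous_const).mem_nhds h] with z hz
        have hz' : r z < -(2 * a / 3) := hz
        simp only [hψ, hχ1 z hz'.le, one_mul]
      rw [gdH_congr e, hg, gdH_norm_sq, smul_smul]
      exact gd_ray_int hF (hray y hy) (by positivity)
  refine ⟨univ, isOpen_univ, subset_univ _, ρ, hρs.contDiffOn, ?_, ?_, ?_, ?_⟩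
  · ext y
    constructor
    · intro hy
      refine ⟨mem_univ _, ?_⟩
      have h1 := hu1 y hy
      have h2 : g y ≤ 0 := by
        have := hM y (subset_closure hy)
        simp only [hg, hD]
        nlinarith [norm_nonneg y]
      have h3 : ψ y ≤ 0 := mul_nonpos_of_nonneg_of_nonpos (Real.smoothTransition.nonneg _) h2
      have h4 : ε * ψ y ≤ 0 := mul_nonpos_of_nonneg_of_nonpos hε.le h3
      exact add_neg_of_neg_of_nonpos h1 h4
    · rintro ⟨-, hy⟩
      by_contra hyn
      have h1 := hu2 y hyn
      have h2 := hχ0 y (by have := hr2 y hyn; linarith)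
      have h3 : ρ y = u y := by simp [hρ, hψ, h2]
      rw [h3] at hy
      linarith
  · intro x hx
    have hxn : x ∉ Ω := by rw [hΩo.frontier_eq] at hx; exact hx.2
    have hrx : -(a / 3) < r x := by have := hr2 x hxn; linarith
    have e : ρ =ᶠ[𝓝 x] u := by
      filter_upwards [(isOpen_lt continuous_const hr.continuous).mem_nhds hrx] with z hz
      have hz' : -(a / 3) < r z := hz
      simp [hρ, hψ, hχ0 z hz'.le]
    rw [e.fderiv_eq]
    exact hdu x hx
  · intro x hx
    exact ⟨gdH ρ x, hHess x hx, gdH_coe hρs x⟩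
  · obtain ⟨δ, hδ, R, hR, h⟩ := gd_uniform hF hK (gdH ρ) (gdH_cont hρs) hHess
    refine ⟨δ, hδ, R, hR, fun C hC x hx => ⟨_, h C hC x hx, ?_⟩⟩
    rw [← gdH_coe hρs x]
    rfl
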